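/- Let p ≥ 1, n ≥ p, and let a₀, a₁, …, a_p ∈ ℝ with a_p > 0. Suppose there exist m ∈ ℕ and a vector λ ∈ (ℝ₊)^{m+p} of non-negative reals such that a_k = a_p·σ_{p-k}(λ) for every 0 ≤ k ≤ p (equivalently, the polynomial Xᵐ·(a₀ + a₁X + … + a_pXᵖ) + R is real-rooted for some polynomial R with non-negative coefficients of degree at most m-1). Then the function f(x) = a₀ + a₁σ₁(x) + … + a_pσ_p(x) is (1/p)-concave on the positive orthant (0, ∞)ⁿ, i.e. f^{1/p} is concave there. -/

import Mathlib

/-- The `k`-th elementary symmetric polynomial in `n` real variables. -/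
noncomputable def esymm (n k : ℕ) (x : Fin n → ℝ) : ℝ :=
  ∑ s ∈ Finset.powersetCard k (Finset.univ : Finset (Fin n)), ∏ i ∈ s, x i

/-!
If `λ` is appended to `x`, the polynomial `∑ k, a k * σ k x` becomes `a p * σ p (x, λ)`, by the
convolution formula for elementary symmetric polynomials of a disjoint union. So it is enough to
show that `σ p ^ (1 / p)` is concave on the nonnegative orthant. As this function is positively
homogeneous of degree one, concavity amounts to superadditivity.

Telescoping writes `σ p` as the product of the ratios `φ k = σ (k + 1) / σ k`, `k < p`, and
geometric means are superadditive and monotone, so it remains to see that each `φ k` is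
superadditive (Marcus and Lopes). Euler's identity gives
`(k + 2) * φ (k + 1) x = ∑ i, H (x i) (φ k x')`, where `x'` is `x` without its `i`-th entry and
`H a b = a * b / (a + b)`; since `H` is superadditive and monotone, induction on `k` applies.
-/

section ElementarySymmetric

open Finset Polynomial

variable {ι κ R : Type*} [CommSemiring R]

/-- The `k`-th elementary symmetric polynomial of the family `(x i)` indexed by `i ∈ s`. Keeping
the index set a parameter lets inductive arguments delete one variable at a time. -/
def esymmOn (s : Finset ι) (k : ℕ) (x : ι → R) : R :=
  ∑ t ∈ s.powersetCard k, ∏ i ∈ t, x i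

theorem esymmOn_zero (s : Finset ι) (x : ι → R) : esymmOn s 0 x = 1 := by
  simp [esymmOn]

theorem esymmOn_one (s : Finset ι) (x : ι → R) : esymmOn s 1 x = ∑ i ∈ s, x i := by
  simp [esymmOn, powersetCard_one]

theorem esymmOn_smul (s : Finset ι) (k : ℕ) (c : R) (x : ι → R) :
    esymmOn s k (c • x) = c ^ k * esymmOn s k x := by
  simp only [esymmOn, mul_sum, Pi.smul_apply, smul_eq_mul]
  refine sum_congr rfl fun t ht => ?_
  rw [prod_mul_distrib, prod_const, (mem_powersetCard.1 ht).2]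

theorem coeff_prod_one_add_C_mul_X (s : Finset ι) (x : ι → R) (k : ℕ) :
    (∏ i ∈ s, (1 + C (x i) * X)).coeff k = esymmOn s k x := by
  classical
  simp only [prod_one_add, prod_mul_distrib, prod_const, ← map_prod, finsetSum_coeff,
    coeff_C_mul_X_pow, esymmOn, powersetCard_eq_filter, sum_filter, eq_comm]

theorem esymmOn_succ_eq_mul_erase_add_erase [DecidableEq ι] {s : Finset ι} {i : ι} (hi : i ∈ s)
    (k : ℕ) (x : ι → R) :
    esymmOn s (k + 1) x = x i * esymmOn (s.erase i) k x + esymmOn (s.erase i) (k + 1) x := by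
  simp only [← coeff_prod_one_add_C_mul_X]
  rw [← mul_prod_erase s _ hi, add_mul, one_mul, mul_assoc, coeff_add, coeff_C_mul, coeff_X_mul,
    add_comm]

-- Compare coefficients in the derivative of the generating polynomial `∏ i ∈ s, (1 + x i * X)`.
theorem succ_mul_esymmOn_succ [DecidableEq ι] (s : Finset ι) (k : ℕ) (x : ι → R) :
    (k + 1) * esymmOn s (k + 1) x = ∑ i ∈ s, x i * esymmOn (s.erase i) k x := by
  have hderiv : derivative (∏ i ∈ s, (1 + C (x i) * X)) =
      ∑ i ∈ s, C (x i) * ∏ j ∈ s.erase i, (1 + C (x j) * X) := by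
    rw [derivative_prod_finset]
    refine sum_congr rfl fun i _ => ?_
    rw [mul_comm, derivative_add, derivative_one, zero_add, derivative_C_mul_X]
  simpa only [coeff_derivative, finsetSum_coeff, coeff_C_mul, coeff_prod_one_add_C_mul_X,
    mul_comm (esymmOn s (k + 1) x)] using congrArg (coeff · k) hderiv

theorem esymmOn_disjSum (s : Finset ι) (t : Finset κ) (k : ℕ) (x : ι → R) (y : κ → R) :
    esymmOn (s.disjSum t) k (Sum.elim x y) =
      ∑ ij ∈ antidiagonal k, esymmOn s ij.1 x * esymmOn t ij.2 y := by
  simp only [← coeff_prod_one_add_C_mul_X, prod_disjSum, Sum.elim_inl, Sum.elim_inr, coeff_mul]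

theorem sum_mul_esymmOn_eq_mul_esymmOn_sumElim [Fintype ι] [Fintype κ] {p : ℕ} {a : ℕ → R}
    {lam : κ → R} (ha : ∀ k ≤ p, a k = a p * esymmOn univ (p - k) lam) (x : ι → R) :
    ∑ k ∈ range (p + 1), a k * esymmOn univ k x =
      a p * esymmOn univ p (Sum.elim x lam) := by
  rw [← univ_disjSum_univ, esymmOn_disjSum, Nat.sum_antidiagonal_eq_sum_range_succ_mk, mul_sum]
  refine sum_congr rfl fun k hk => ?_
  rw [ha k (mem_range_succ_iff.1 hk), mul_assoc, mul_comm (esymmOn univ k x)]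

end ElementarySymmetric

section Ratio

open Finset

variable {ι K : Type*} [Field K]

/-- Half the harmonic mean of `a` and `b`, through which ratios of elementary symmetric
polynomials in `n` variables are expressed by those in `n - 1` variables. On the nonnegative
quadrant, the convention `0 / 0 = 0` gives its continuous extension to `a = b = 0`. -/
def parallelSum (a b : K) : K := a * b / (a + b)

/-- The Marcus–Lopes ratio `σ (k + 1) / σ k` of consecutive elementary symmetric polynomials. For
nonnegative variables, `σ k = 0` forces `σ (k + 1) = 0`, so that the junk value `0 / 0 = 0` is
consistent with `σ (k + 1) = (σ (k + 1) / σ k) * σ k`. -/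
def esymmRatio (s : Finset ι) (k : ℕ) (x : ι → K) : K :=
  esymmOn s (k + 1) x / esymmOn s k x

theorem esymmRatio_zero (s : Finset ι) (x : ι → K) : esymmRatio s 0 x = ∑ i ∈ s, x i := by
  rw [esymmRatio, esymmOn_zero, div_one, esymmOn_one]

variable [LinearOrder K] [IsStrictOrderedRing K]

theorem parallelSum_le_parallelSum_left {a b b' : K} (ha : 0 ≤ a) (hb : 0 ≤ b) (hbb' : b ≤ b') :
    parallelSum a b ≤ parallelSum a b' := by
  obtain rfl | ha := ha.eq_or_lt
  · simp [parallelSum]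
  · rw [parallelSum, parallelSum, div_le_div_iff₀ (by linarith) (by linarith)]
    linarith [mul_le_mul_of_nonneg_left hbb' (sq_nonneg a)]

theorem parallelSum_add_le {a b c d : K} (ha : 0 ≤ a) (hb : 0 ≤ b) (hc : 0 ≤ c) (hd : 0 ≤ d) :
    parallelSum a b + parallelSum c d ≤ parallelSum (a + c) (b + d) := by
  unfold parallelSum
  obtain hab | hab := (add_nonneg ha hb).eq_or_lt
  · obtain ⟨rfl, rfl⟩ := (add_eq_zero_iff_of_nonneg ha hb).1 hab.symm
    simp
  obtain hcd | hcd := (add_nonneg hc hd).eq_or_lt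
  · obtain ⟨rfl, rfl⟩ := (add_eq_zero_iff_of_nonneg hc hd).1 hcd.symm
    simp
  rw [div_add_div _ _ hab.ne' hcd.ne', div_le_div_iff₀ (by positivity) (by linarith)]
  linarith [sq_nonneg (a * d - b * c)]

theorem esymmOn_nonneg {s : Finset ι} {x : ι → K} (hx : ∀ i ∈ s, 0 ≤ x i) (k : ℕ) :
    0 ≤ esymmOn s k x :=
  sum_nonneg fun _ ht => prod_nonneg fun i hi => hx i ((mem_powersetCard.1 ht).1 hi)

theorem esymmOn_succ_eq_zero {s : Finset ι} {k : ℕ} {x : ι → K} (hx : ∀ i ∈ s, 0 ≤ x i)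
    (h : esymmOn s k x = 0) : esymmOn s (k + 1) x = 0 := by
  have hprod : ∀ u ∈ s.powersetCard k, ∏ i ∈ u, x i = 0 :=
    (sum_eq_zero_iff_of_nonneg fun u hu =>
      prod_nonneg fun i hi => hx i ((mem_powersetCard.1 hu).1 hi)).1 h
  refine sum_eq_zero fun t ht => ?_
  obtain ⟨hts, htk⟩ := mem_powersetCard.1 ht
  obtain ⟨u, hut, huk⟩ := exists_subset_card_eq (k.le_succ.trans_eq htk.symm)
  exact zero_dvd_iff.1 <|
    hprod u (mem_powersetCard.2 ⟨hut.trans hts, huk⟩) ▸ prod_dvd_prod_of_subset u t x hut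

theorem esymmRatio_nonneg {s : Finset ι} {x : ι → K} (hx : ∀ i ∈ s, 0 ≤ x i) (k : ℕ) :
    0 ≤ esymmRatio s k x :=
  div_nonneg (esymmOn_nonneg hx _) (esymmOn_nonneg hx _)

theorem esymmOn_mul_esymmRatio {s : Finset ι} {x : ι → K} (hx : ∀ i ∈ s, 0 ≤ x i) (k : ℕ) :
    esymmOn s k x * esymmRatio s k x = esymmOn s (k + 1) x :=
  mul_div_cancel_of_imp' (esymmOn_succ_eq_zero hx)

theorem prod_range_esymmRatio {s : Finset ι} {x : ι → K} (hx : ∀ i ∈ s, 0 ≤ x i) (p : ℕ) :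
    ∏ k ∈ range p, esymmRatio s k x = esymmOn s p x :=
  prod_range_induction _ (esymmOn s · x) (esymmOn_zero s x) p fun k _ =>
    (esymmOn_mul_esymmRatio hx k).symm

theorem mul_esymmOn_erase_div_esymmOn [DecidableEq ι] {s : Finset ι} {i : ι} {x : ι → K}
    (hx : ∀ j ∈ s, 0 ≤ x j) (hi : i ∈ s) (k : ℕ) :
    x i * esymmOn (s.erase i) (k + 1) x / esymmOn s (k + 1) x =
      parallelSum (x i) (esymmRatio (s.erase i) k x) := by
  have hx' : ∀ j ∈ s.erase i, 0 ≤ x j := fun j hj => hx j (mem_of_mem_erase hj)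
  rw [esymmOn_succ_eq_mul_erase_add_erase hi, parallelSum]
  by_cases h0 : esymmOn (s.erase i) k x = 0
  · simp [esymmRatio, h0, esymmOn_succ_eq_zero hx' h0]
  · rw [← esymmOn_mul_esymmRatio hx', mul_comm (x i) (esymmOn _ k x), ← mul_add,
      mul_left_comm, mul_div_mul_left _ _ h0]

theorem esymmRatio_succ [DecidableEq ι] {s : Finset ι} {x : ι → K} (hx : ∀ i ∈ s, 0 ≤ x i)
    (k : ℕ) :
    ((k + 1 : ℕ) + 1) * esymmRatio s (k + 1) x =
      ∑ i ∈ s, parallelSum (x i) (esymmRatio (s.erase i) k x) := by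
  rw [esymmRatio, ← mul_div_assoc, succ_mul_esymmOn_succ, sum_div]
  exact sum_congr rfl fun i hi => mul_esymmOn_erase_div_esymmOn hx hi k

theorem esymmRatio_add_le {s : Finset ι} {x y : ι → K} (hx : ∀ i ∈ s, 0 ≤ x i)
    (hy : ∀ i ∈ s, 0 ≤ y i) (k : ℕ) :
    esymmRatio s k x + esymmRatio s k y ≤ esymmRatio s k (x + y) := by
  classical
  induction k generalizing s with
  | zero => simp [esymmRatio_zero, sum_add_distrib]
  | succ k ih =>
    have hxy : ∀ i ∈ s, 0 ≤ (x + y) i := fun i hi => add_nonneg (hx i hi) (hy i hi)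
    refine le_of_mul_le_mul_left ?_ (by positivity : (0 : K) < (k + 1 : ℕ) + 1)
    rw [mul_add, esymmRatio_succ hx, esymmRatio_succ hy, esymmRatio_succ hxy, ← sum_add_distrib]
    refine sum_le_sum fun i hi => ?_
    have hx' : ∀ j ∈ s.erase i, 0 ≤ x j := fun j hj => hx j (mem_of_mem_erase hj)
    have hy' : ∀ j ∈ s.erase i, 0 ≤ y j := fun j hj => hy j (mem_of_mem_erase hj)
    have hφx := esymmRatio_nonneg hx' k
    have hφy := esymmRatio_nonneg hy' k
    calc parallelSum (x i) (esymmRatio (s.erase i) k x) +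
          parallelSum (y i) (esymmRatio (s.erase i) k y)
        ≤ parallelSum (x i + y i) (esymmRatio (s.erase i) k x + esymmRatio (s.erase i) k y) :=
          parallelSum_add_le (hx i hi) hφx (hy i hi) hφy
      _ ≤ parallelSum ((x + y) i) (esymmRatio (s.erase i) k (x + y)) :=
          parallelSum_le_parallelSum_left (hxy i hi) (add_nonneg hφx hφy) (ih hx' hy')

end Ratio

section Concavity

open Finset

variable {ι κ : Type*}

theorem prod_rpow_le_sum_mul_div_mul_prod_rpow {s : Finset ι} {w a b : ι → ℝ}
    (hw : ∀ i ∈ s, 0 ≤ w i) (hw1 : ∑ i ∈ s, w i = 1) (ha : ∀ i ∈ s, 0 ≤ a i)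
    (hab : ∀ i ∈ s, a i ≤ b i) :
    ∏ i ∈ s, a i ^ w i ≤ (∑ i ∈ s, w i * (a i / b i)) * ∏ i ∈ s, b i ^ w i := by
  have hb : ∀ i ∈ s, 0 ≤ b i := fun i hi => (ha i hi).trans (hab i hi)
  have hdiv : ∀ i ∈ s, 0 ≤ a i / b i := fun i hi => div_nonneg (ha i hi) (hb i hi)
  calc ∏ i ∈ s, a i ^ w i = ∏ i ∈ s, (a i / b i) ^ w i * b i ^ w i :=
        prod_congr rfl fun i hi => by
          rw [← Real.mul_rpow (hdiv i hi) (hb i hi),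
            div_mul_cancel_of_imp fun h => le_antisymm (h ▸ hab i hi) (ha i hi)]
    _ = (∏ i ∈ s, (a i / b i) ^ w i) * ∏ i ∈ s, b i ^ w i := prod_mul_distrib
    _ ≤ (∑ i ∈ s, w i * (a i / b i)) * ∏ i ∈ s, b i ^ w i :=
        mul_le_mul_of_nonneg_right (Real.geom_mean_le_arith_mean_weighted s w _ hw hw1 hdiv)
          (prod_nonneg fun i hi => Real.rpow_nonneg (hb i hi) _)

theorem prod_rpow_add_prod_rpow_le_prod_add_rpow {s : Finset ι} {w a b : ι → ℝ}
    (hw : ∀ i ∈ s, 0 ≤ w i) (hw1 : ∑ i ∈ s, w i = 1) (ha : ∀ i ∈ s, 0 ≤ a i)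
    (hb : ∀ i ∈ s, 0 ≤ b i) :
    ∏ i ∈ s, a i ^ w i + ∏ i ∈ s, b i ^ w i ≤ ∏ i ∈ s, (a i + b i) ^ w i := by
  have hsum : ∑ i ∈ s, w i * (a i / (a i + b i)) + ∑ i ∈ s, w i * (b i / (a i + b i)) ≤ 1 := by
    rw [← sum_add_distrib, ← hw1]
    refine sum_le_sum fun i hi => ?_
    rw [← mul_add, ← add_div]
    exact mul_le_of_le_one_right (hw i hi) (div_self_le_one _)
  calc ∏ i ∈ s, a i ^ w i + ∏ i ∈ s, b i ^ w i
      ≤ (∑ i ∈ s, w i * (a i / (a i + b i)) + ∑ i ∈ s, w i * (b i / (a i + b i))) *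
          ∏ i ∈ s, (a i + b i) ^ w i := by
        rw [add_mul]
        exact add_le_add
          (prod_rpow_le_sum_mul_div_mul_prod_rpow hw hw1 ha fun i hi =>
            le_add_of_nonneg_right (hb i hi))
          (prod_rpow_le_sum_mul_div_mul_prod_rpow hw hw1 hb fun i hi =>
            le_add_of_nonneg_left (ha i hi))
    _ ≤ ∏ i ∈ s, (a i + b i) ^ w i :=
        mul_le_of_le_one_left
          (prod_nonneg fun i hi => Real.rpow_nonneg (add_nonneg (ha i hi) (hb i hi)) _) hsum

theorem rpow_inv_esymmOn_eq_prod_rpow_esymmRatio {s : Finset ι} {x : ι → ℝ}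
    (hx : ∀ i ∈ s, 0 ≤ x i) (p : ℕ) :
    esymmOn s p x ^ (p : ℝ)⁻¹ = ∏ k ∈ range p, esymmRatio s k x ^ (p : ℝ)⁻¹ := by
  rw [← prod_range_esymmRatio hx, Real.finsetProd_rpow _ _ fun k _ => esymmRatio_nonneg hx k]

theorem rpow_inv_esymmOn_add_le {s : Finset ι} {p : ℕ} (hp : p ≠ 0) {x y : ι → ℝ}
    (hx : ∀ i ∈ s, 0 ≤ x i) (hy : ∀ i ∈ s, 0 ≤ y i) :
    esymmOn s p x ^ (p : ℝ)⁻¹ + esymmOn s p y ^ (p : ℝ)⁻¹ ≤ esymmOn s p (x + y) ^ (p : ℝ)⁻¹ := by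
  have hφx : ∀ k ∈ range p, 0 ≤ esymmRatio s k x := fun k _ => esymmRatio_nonneg hx k
  have hφy : ∀ k ∈ range p, 0 ≤ esymmRatio s k y := fun k _ => esymmRatio_nonneg hy k
  have hxy : ∀ i ∈ s, 0 ≤ (x + y) i := fun i hi => add_nonneg (hx i hi) (hy i hi)
  rw [rpow_inv_esymmOn_eq_prod_rpow_esymmRatio hx, rpow_inv_esymmOn_eq_prod_rpow_esymmRatio hy,
    rpow_inv_esymmOn_eq_prod_rpow_esymmRatio hxy]
  calc ∏ k ∈ range p, esymmRatio s k x ^ (p : ℝ)⁻¹ + ∏ k ∈ range p, esymmRatio s k y ^ (p : ℝ)⁻¹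
      ≤ ∏ k ∈ range p, (esymmRatio s k x + esymmRatio s k y) ^ (p : ℝ)⁻¹ :=
        prod_rpow_add_prod_rpow_le_prod_add_rpow (fun _ _ => by positivity) (by simp [hp]) hφx hφy
    _ ≤ ∏ k ∈ range p, esymmRatio s k (x + y) ^ (p : ℝ)⁻¹ :=
        prod_le_prod (fun k hk => Real.rpow_nonneg (add_nonneg (hφx k hk) (hφy k hk)) _)
          fun k hk => Real.rpow_le_rpow (add_nonneg (hφx k hk) (hφy k hk))
            (esymmRatio_add_le hx hy k) (by positivity)

theorem rpow_inv_esymmOn_smul {s : Finset ι} {p : ℕ} (hp : p ≠ 0) {c : ℝ} (hc : 0 ≤ c)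
    {x : ι → ℝ} (hx : ∀ i ∈ s, 0 ≤ x i) :
    esymmOn s p (c • x) ^ (p : ℝ)⁻¹ = c * esymmOn s p x ^ (p : ℝ)⁻¹ := by
  rw [esymmOn_smul, Real.mul_rpow (pow_nonneg hc p) (esymmOn_nonneg hx p),
    Real.pow_rpow_inv_natCast hc hp]

theorem concaveOn_convexCone_of_superadditive {𝕜 E β : Type*} [Semiring 𝕜] [PartialOrder 𝕜]
    [AddCommMonoid E] [Module 𝕜 E] [AddCommMonoid β] [PartialOrder β] [Module 𝕜 β]
    (S : ConvexCone 𝕜 E) {f : E → β}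
    (hadd : ∀ x ∈ S, ∀ y ∈ S, f x + f y ≤ f (x + y))
    (hsmul : ∀ c : 𝕜, 0 < c → ∀ x ∈ S, f (c • x) = c • f x) :
    ConcaveOn 𝕜 S f := by
  refine concaveOn_iff_forall_pos.2 ⟨S.convex, fun x hx y hy α β hα hβ _ => ?_⟩
  rw [← hsmul α hα x hx, ← hsmul β hβ y hy]
  exact hadd _ (S.smul_mem hα hx) _ (S.smul_mem hβ hy)

theorem concaveOn_rpow_inv_esymmOn (s : Finset ι) {p : ℕ} (hp : p ≠ 0) :
    ConcaveOn ℝ (Set.Ici 0) fun x : ι → ℝ => esymmOn s p x ^ (p : ℝ)⁻¹ :=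
  concaveOn_convexCone_of_superadditive (ConvexCone.positive ℝ (ι → ℝ))
    (fun _ hx _ hy => rpow_inv_esymmOn_add_le hp (fun i _ => hx i) fun i _ => hy i)
    fun _ hc _ hx => rpow_inv_esymmOn_smul hp hc.le fun i _ => hx i

theorem concaveOn_comp_sumElim_const {𝕜 β : Type*} [Semiring 𝕜] [PartialOrder 𝕜] [IsOrderedRing 𝕜]
    [AddCommMonoid β] [PartialOrder β] [SMul 𝕜 β] {f : (ι ⊕ κ → 𝕜) → β}
    (hf : ConcaveOn 𝕜 (Set.Ici 0) f) {lam : κ → 𝕜} (hlam : 0 ≤ lam) :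
    ConcaveOn 𝕜 (Set.Ici 0) fun x : ι → 𝕜 => f (Sum.elim x lam) := by
  have hmem : ∀ x : ι → 𝕜, 0 ≤ x → Sum.elim x lam ∈ Set.Ici 0 := fun x hx =>
    Sum.rec hx hlam
  refine ⟨convex_Ici 0, fun x hx y hy α β hα hβ hαβ => ?_⟩
  have hcomb : Sum.elim (α • x + β • y) lam = α • Sum.elim x lam + β • Sum.elim y lam := by
    ext (i | j)
    · simp
    · simp [← add_mul, hαβ]
  simpa only [hcomb] using hf.2 (hmem x hx) (hmem y hy) hα hβ hαβ

end Concavity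

theorem stmt12_general {ι κ : Type*} [Fintype ι] [Fintype κ] {p : ℕ} (hp : p ≠ 0) {a : ℕ → ℝ}
    (hap : 0 ≤ a p) {lam : κ → ℝ} (hlam : 0 ≤ lam)
    (ha : ∀ k ≤ p, a k = a p * esymmOn Finset.univ (p - k) lam) :
    ConcaveOn ℝ (Set.Ici 0) fun x : ι → ℝ =>
      (∑ k ∈ Finset.range (p + 1), a k * esymmOn Finset.univ k x) ^ (p : ℝ)⁻¹ := by
  refine ((concaveOn_comp_sumElim_const (concaveOn_rpow_inv_esymmOn Finset.univ hp) hlam).smul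
    (Real.rpow_nonneg hap (p : ℝ)⁻¹)).congr fun x hx => ?_
  have hσ : 0 ≤ esymmOn Finset.univ p (Sum.elim x lam) :=
    esymmOn_nonneg (fun i _ => Sum.rec hx hlam i) p
  simp only [sum_mul_esymmOn_eq_mul_esymmOn_sumElim ha, Real.mul_rpow hap hσ, smul_eq_mul]

theorem stmt12 (p n : ℕ) (hp : 1 ≤ p) (hn : p ≤ n) (a : ℕ → ℝ) (hap : 0 < a p)
    (h : ∃ (m : ℕ) (lam : Fin (m + p) → ℝ), (∀ i, 0 ≤ lam i) ∧
      ∀ k ≤ p, a k = a p * esymm (m + p) (p - k) lam) :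
    ConcaveOn ℝ {x : Fin n → ℝ | ∀ i, 0 < x i}
      (fun x => (∑ k ∈ Finset.range (p + 1), a k * esymm n k x) ^ ((p : ℝ)⁻¹)) := by
  obtain ⟨m, lam, hlam, ha⟩ := h
  have hconvex : Convex ℝ {x : Fin n → ℝ | ∀ i, 0 < x i} := by
    simpa [Set.pi] using convex_pi (s := Set.univ) fun _ _ => convex_Ioi (0 : ℝ)
  exact (stmt12_general (Nat.one_le_iff_ne_zero.1 hp) hap.le hlam ha).subset
    (fun x hx i => (hx i).le) hconvex
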